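/- arXiv:2502.06622 — 5 statements merged into one kernel-verified Lean document; each statement's English description precedes it below -/
import Mathlib

section
/- Let ε > 0, let Φ : ℝ⁴ → ℂ be C² and nowhere vanishing, and let A : ℝ⁴ → ℝ⁴ be C¹. With D_α g = ε ∂_α g + i A_α g, J_α = −Im(Φ · conj(D_αΦ)) and ρ = |Φ|², assume Φ solves the semiclassical Klein–Gordon equation −D₀(D₀Φ) + Σ_{i=1}^3 D_i(D_iΦ) = Φ on ℝ⁴. Then everywhere on ℝ⁴: (−J₀² + J₁² + J₂² + J₃²)/ρ = ε² · |Φ| · (−∂₀∂₀|Φ| + Σ_{i=1}^3 ∂_i∂_i|Φ|) − ρ. -/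
open ComplexConjugate

noncomputable def pd2R (f : (Fin 4 → ℝ) → ℝ) (α β : Fin 4) (x : Fin 4 → ℝ) : ℝ :=
  fderiv ℝ (fun y => fderiv ℝ f y (Pi.single β 1)) x (Pi.single α 1)

/-- The gauge-covariant derivative `D_α g = ε ∂_α g + i A_α g`. -/
noncomputable def Dop (ε : ℝ) (A : (Fin 4 → ℝ) → Fin 4 → ℝ) (α : Fin 4)
    (g : (Fin 4 → ℝ) → ℂ) : (Fin 4 → ℝ) → ℂ :=
  fun x => (ε : ℂ) * fderiv ℝ g x (Pi.single α 1) + Complex.I * (A x α : ℂ) * g x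

lemma aux_line {F : Type*} [NormedAddCommGroup F] [NormedSpace ℝ F] (f : (Fin 4 → ℝ) → F)
    (x e : Fin 4 → ℝ) (hf : DifferentiableAt ℝ f x) :
    HasDerivAt (fun t : ℝ => f (x + t • e)) (fderiv ℝ f x e) 0 :=
  hf.hasFDerivAt.hasLineDerivAt e

lemma aux_eq {F : Type*} [NormedAddCommGroup F] [NormedSpace ℝ F] (f : (Fin 4 → ℝ) → F)
    (x e : Fin 4 → ℝ) (c : F) (hf : DifferentiableAt ℝ f x)
    (h : HasDerivAt (fun t : ℝ => f (x + t • e)) c 0) : fderiv ℝ f x e = c :=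
  (aux_line f x e hf).unique h

lemma aux_re {f : ℝ → ℂ} {c : ℂ} {t : ℝ} (h : HasDerivAt f c t) :
    HasDerivAt (fun s => (f s).re) c.re t :=
  Complex.reCLM.hasFDerivAt.comp_hasDerivAt t h

lemma aux_im {f : ℝ → ℂ} {c : ℂ} {t : ℝ} (h : HasDerivAt f c t) :
    HasDerivAt (fun s => (f s).im) c.im t :=
  Complex.imCLM.hasFDerivAt.comp_hasDerivAt t h

lemma aux_sq (z : ℂ) : ‖z‖ ^ 2 = z.re * z.re + z.im * z.im := by
  rw [← Complex.normSq_apply, Complex.normSq_eq_norm_sq]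

/-- first derivative of the modulus -/
lemma aux_first (Φ : (Fin 4 → ℝ) → ℂ) (x e : Fin 4 → ℝ) (hΦ : DifferentiableAt ℝ Φ x)
    (hne : Φ x ≠ 0) :
    fderiv ℝ (fun y => ‖Φ y‖) x e =
      ((Φ x).re * (fderiv ℝ Φ x e).re + (Φ x).im * (fderiv ℝ Φ x e).im) / ‖Φ x‖ := by
  have hd : DifferentiableAt ℝ (fun y => ‖Φ y‖) x := hΦ.norm ℝ hne
  have h1 := aux_line _ x e hd
  have h2 := aux_line _ x e hΦ
  have hu := aux_re h2
  have hv := aux_im h2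
  have h3 := h1.mul h1
  have h4 := (hu.mul hu).add (hv.mul hv)
  have h5 := h3.unique (h4.congr_of_eventuallyEq (Filter.Eventually.of_forall fun t => by
    have := aux_sq (Φ (x + t • e))
    simp only [Pi.mul_apply, Pi.add_apply]
    rw [← this, sq]))
  have hn : ‖Φ x‖ ≠ 0 := norm_ne_zero_iff.mpr hne
  simp only [zero_smul, add_zero] at h5
  rw [eq_div_iff hn]
  linarith

lemma aux_main (ε : ℝ) (Φ : (Fin 4 → ℝ) → ℂ) (A : (Fin 4 → ℝ) → Fin 4 → ℝ)
    (hΦ : ContDiff ℝ 2 Φ) (hA : ContDiff ℝ 1 A) (hne : ∀ x, Φ x ≠ 0) (α : Fin 4)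
    (x : Fin 4 → ℝ) :
    ε ^ 2 * ‖Φ x‖ * pd2R (fun y => ‖Φ y‖) α α x
      - (- (Φ x * conj (Dop ε A α Φ x)).im) ^ 2 / ‖Φ x‖ ^ 2 =
      (Φ x).re * (Dop ε A α (Dop ε A α Φ) x).re + (Φ x).im * (Dop ε A α (Dop ε A α Φ) x).im := by
  have hΦd : Differentiable ℝ Φ := hΦ.differentiable (by norm_num)
  have hAd : Differentiable ℝ (fun y => A y α) :=
    differentiable_pi.1 (hA.differentiable (by norm_num)) α
  set e : Fin 4 → ℝ := Pi.single α 1 with he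
  have hPd : Differentiable ℝ (fun y => fderiv ℝ Φ y e) :=
    ((hΦ.fderiv_right (m := 1) (by norm_num)).clm_apply contDiff_const).differentiable (by norm_num)
  have hRd : Differentiable ℝ (fun y => ‖Φ y‖) := fun y => (hΦd y).norm ℝ (hne y)
  have hn : ‖Φ x‖ ≠ 0 := norm_ne_zero_iff.mpr (hne x)
  have lΦ := aux_line _ x e (hΦd x)
  have lP := aux_line _ x e (hPd x)
  have lA := aux_line _ x e (hAd x)
  have lR := aux_line _ x e (hRd x)
  have hfst : (fun y => fderiv ℝ (fun y => ‖Φ y‖) y e) = fun y =>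
      ((Φ y).re * (fderiv ℝ Φ y e).re + (Φ y).im * (fderiv ℝ Φ y e).im) / ‖Φ y‖ :=
    funext fun y => aux_first Φ y e (hΦd y) (hne y)
  have hre : ∀ {g : (Fin 4 → ℝ) → ℂ}, Differentiable ℝ g → Differentiable ℝ (fun y => (g y).re) :=
    fun h => Complex.reCLM.differentiable.comp h
  have him : ∀ {g : (Fin 4 → ℝ) → ℂ}, Differentiable ℝ g → Differentiable ℝ (fun y => (g y).im) :=
    fun h => Complex.imCLM.differentiable.comp h
  have hnum := ((hre hΦd).mul (hre hPd)).add ((him hΦd).mul (him hPd)) x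
  have hq : DifferentiableAt ℝ (fun y =>
      ((Φ y).re * (fderiv ℝ Φ y e).re + (Φ y).im * (fderiv ℝ Φ y e).im) / ‖Φ y‖) x := by
    simp only [div_eq_mul_inv]
    exact hnum.mul ((hRd x).inv hn)
  have h2 := aux_eq (fun y =>
      ((Φ y).re * (fderiv ℝ Φ y e).re + (Φ y).im * (fderiv ℝ Φ y e).im) / ‖Φ y‖) x e _
    hq
    ((((aux_re lΦ).mul (aux_re lP)).add ((aux_im lΦ).mul (aux_im lP))).div lR
      (by simpa using hn))
  have h2a : pd2R (fun y => ‖Φ y‖) α α x = fderiv ℝ (fun y =>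
      ((Φ y).re * (fderiv ℝ Φ y e).re + (Φ y).im * (fderiv ℝ Φ y e).im) / ‖Φ y‖) x e := by
    unfold pd2R
    rw [← he, hfst]
  have hAc : Differentiable ℝ (fun y => ((A y α : ℝ) : ℂ)) :=
    Complex.ofRealCLM.differentiable.comp hAd
  have hD := aux_eq (Dop ε A α Φ) x e _
    (((hPd.const_mul (ε : ℂ)).add ((hAc.const_mul Complex.I).mul hΦd)) x)
    ((lP.const_mul (ε : ℂ)).add ((lA.ofReal_comp.const_mul Complex.I).mul lΦ))
  have hDD : Dop ε A α (Dop ε A α Φ) x = (ε : ℂ) * fderiv ℝ (Dop ε A α Φ) x e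
      + Complex.I * (A x α : ℂ) * ((ε : ℂ) * fderiv ℝ Φ x e + Complex.I * (A x α : ℂ) * Φ x) := rfl
  have hD1 : Dop ε A α Φ x = (ε : ℂ) * fderiv ℝ Φ x e + Complex.I * (A x α : ℂ) * Φ x := rfl
  rw [hDD, hD, hD1, h2a, h2, aux_first Φ x e (hΦd x) (hne x)]
  have hs := aux_sq (Φ x)
  simp only [Pi.mul_apply, Pi.add_apply, zero_smul, add_zero]
  generalize fderiv ℝ (fun y => fderiv ℝ Φ y e) x e = Q
  generalize fderiv ℝ Φ x e = P
  generalize fderiv ℝ (fun y => A y α) x e = a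
  generalize A x α = b
  generalize ‖Φ x‖ = R at *
  generalize Φ x = z at *
  simp only [Complex.mul_re, Complex.mul_im, Complex.add_re, Complex.add_im, Complex.ofReal_re,
    Complex.ofReal_im, Complex.I_re, Complex.I_im, Complex.conj_re, Complex.conj_im, map_add, map_mul]
  obtain ⟨u, v⟩ := z
  obtain ⟨p, q⟩ := P
  obtain ⟨r, s⟩ := Q
  simp only at hs ⊢
  have e1 : ε ^ 2 * R * (((p * p + u * r + (q * q + v * s)) * R - (u * p + v * q) * ((u * p + v * q) / R)) / R ^ 2)
      = ε ^ 2 * (u * r + v * s) + ε ^ 2 * (u * q - v * p) ^ 2 / R ^ 2 := by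
    field_simp
    rw [hs]; ring
  have e2 : (ε * (u * q - v * p) + b * R ^ 2) ^ 2 / R ^ 2 = ε ^ 2 * (u * q - v * p) ^ 2 / R ^ 2
      + 2 * ε * b * (u * q - v * p) + b ^ 2 * R ^ 2 := by
    field_simp
    ring
  have e3 : ∀ X Y Z : ℝ, X = ε ^ 2 * R * (((p * p + u * r + (q * q + v * s)) * R - (u * p + v * q) * ((u * p + v * q) / R)) / R ^ 2) →
      Y = ε * (u * q - v * p) + b * R ^ 2 →
      Z = ε ^ 2 * (u * r + v * s) - 2 * ε * b * (u * q - v * p) - b ^ 2 * R ^ 2 →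
      X - Y ^ 2 / R ^ 2 = Z := by
    intro X Y Z hX hY hZ
    rw [hX, hY, hZ, e1, e2]; ring
  apply e3
  · ring
  · rw [hs]; ring
  · rw [hs]; ring


/-- Proposition 3.6, equation (5.3): for solutions of the semiclassical Klein-Gordon
equation, `J^αJ_α/ρ = ε² √ρ □√ρ − ρ`. -/
theorem stmt2 (ε : ℝ) (hε : 0 < ε)
    (Φ : (Fin 4 → ℝ) → ℂ) (A : (Fin 4 → ℝ) → Fin 4 → ℝ)
    (hΦ : ContDiff ℝ 2 Φ) (hA : ContDiff ℝ 1 A)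
    (hne : ∀ x, Φ x ≠ 0)
    (hKG : ∀ x, -(Dop ε A 0 (Dop ε A 0 Φ)) x + (Dop ε A 1 (Dop ε A 1 Φ)) x
      + (Dop ε A 2 (Dop ε A 2 Φ)) x + (Dop ε A 3 (Dop ε A 3 Φ)) x = Φ x)
    (J : Fin 4 → (Fin 4 → ℝ) → ℝ)
    (hJ : ∀ α x, J α x = - (Φ x * conj (Dop ε A α Φ x)).im)
    (ρ : (Fin 4 → ℝ) → ℝ) (hρ : ∀ x, ρ x = ‖Φ x‖ ^ 2) :
    ∀ x, (-(J 0 x) ^ 2 + (J 1 x) ^ 2 + (J 2 x) ^ 2 + (J 3 x) ^ 2) / ρ x =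
      ε ^ 2 * ‖Φ x‖ *
        (- pd2R (fun y => ‖Φ y‖) 0 0 x
         + pd2R (fun y => ‖Φ y‖) 1 1 x
         + pd2R (fun y => ‖Φ y‖) 2 2 x
         + pd2R (fun y => ‖Φ y‖) 3 3 x) - ρ x := by
  intro x
  have h0 := aux_main ε Φ A hΦ hA hne 0 x
  have h1 := aux_main ε Φ A hΦ hA hne 1 x
  have h2 := aux_main ε Φ A hΦ hA hne 2 x
  have h3 := aux_main ε Φ A hΦ hA hne 3 x
  have k := hKG x
  have kr := congrArg Complex.re k
  have ki := congrArg Complex.im k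
  simp only [Complex.add_re, Complex.neg_re, Complex.add_im, Complex.neg_im] at kr ki
  have hs := aux_sq (Φ x)
  rw [← hJ] at h0 h1 h2 h3
  rw [hρ, add_div, add_div, add_div, neg_div]
  linear_combination h0 - h1 - h2 - h3 - (Φ x).re * kr - (Φ x).im * ki + hs
end

section
/- Let ξ₀, ξ₁, ξ₂, ξ₃ ∈ ℂ, E, B ∈ ℝ³, X⁰ ∈ ℝ and X ∈ ℝ³. Set e = (|ξ₀|² + |ξ₁|² + |ξ₂|² + |ξ₃|² + ‖E‖² + ‖B‖²)/2. Then (X⁰ − ‖X‖)·e ≤ X⁰·e + Σ_{i=1}^3 Re(ξ₀ · conj(ξ_i)) X_i + ⟨X, E × B⟩ ≤ (X⁰ + ‖X‖)·e, where × is the cross product on ℝ³, ⟨·,·⟩ the Euclidean inner product and ‖·‖ the Euclidean norm. -/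
open ComplexConjugate

/-- The cross product on `ℝ³`. -/
noncomputable def cross (a b : Fin 3 → ℝ) : Fin 3 → ℝ :=
  ![a 1 * b 2 - a 2 * b 1, a 2 * b 0 - a 0 * b 2, a 0 * b 1 - a 1 * b 0]

theorem dot_bound (v X : Fin 3 → ℝ) (A : ℝ) (hA : 0 ≤ A) (h : ∑ i, v i ^ 2 ≤ A ^ 2) :
    |∑ i, v i * X i| ≤ Real.sqrt (∑ i, (X i) ^ 2) * A := by
  have hX : 0 ≤ ∑ i, (X i) ^ 2 := Finset.sum_nonneg fun i _ => sq_nonneg _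
  apply abs_le_of_sq_le_sq _ (by positivity)
  rw [mul_pow, Real.sq_sqrt hX]
  calc _ ≤ (∑ i, v i ^ 2) * ∑ i, X i ^ 2 := Finset.sum_mul_sq_le_sq_mul_sq _ _ _
    _ ≤ A ^ 2 * ∑ i, X i ^ 2 := by gcongr
    _ = _ := mul_comm _ _

theorem re_sq_bound (z w : ℂ) : (z * conj w).re ^ 2 ≤ ‖z‖ ^ 2 * ‖w‖ ^ 2 := by
  have h := Complex.abs_re_le_norm (z * conj w)
  rw [norm_mul, Complex.norm_conj] at h
  rw [← mul_pow, ← sq_abs]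
  gcongr

/-- The key pointwise estimate in the proof of Proposition 5.5: two-sided bound of the
modulated energy flux `h_{0β}X^β = e X⁰ + Σᵢ Re(ξ₀ conj ξᵢ)Xᵢ + ⟨X, E×B⟩` in terms of
the modulated energy density `e = (|ξ|² + ‖E‖² + ‖B‖²)/2`. -/
theorem stmt9 (ξ : Fin 4 → ℂ) (E B : Fin 3 → ℝ) (X0 : ℝ) (X : Fin 3 → ℝ)
    (e : ℝ)
    (he : e = ((∑ α : Fin 4, ‖ξ α‖ ^ 2) + (∑ i, (E i) ^ 2)
      + ∑ i, (B i) ^ 2) / 2) :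
    (X0 - Real.sqrt (∑ i, (X i) ^ 2)) * e ≤
      X0 * e + (∑ i : Fin 3, (ξ 0 * conj (ξ i.succ)).re * X i)
        + (∑ i : Fin 3, X i * cross E B i) ∧
    X0 * e + (∑ i : Fin 3, (ξ 0 * conj (ξ i.succ)).re * X i)
        + (∑ i : Fin 3, X i * cross E B i) ≤ (X0 + Real.sqrt (∑ i, (X i) ^ 2)) * e := by
  have h1 := dot_bound (fun i => (ξ 0 * conj (ξ i.succ)).re) X
    ((∑ α : Fin 4, ‖ξ α‖ ^ 2) / 2) (by positivity) (by
      have hs : ∑ i : Fin 3, (ξ 0 * conj (ξ i.succ)).re ^ 2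
          ≤ ‖ξ 0‖ ^ 2 * ∑ i : Fin 3, ‖ξ i.succ‖ ^ 2 := by
        rw [Finset.mul_sum]
        exact Finset.sum_le_sum fun i _ => re_sq_bound _ _
      rw [Fin.sum_univ_succ (fun α : Fin 4 => ‖ξ α‖ ^ 2)]
      nlinarith [sq_nonneg (‖ξ 0‖ ^ 2 - ∑ i : Fin 3, ‖ξ i.succ‖ ^ 2)])
  have h2 := dot_bound (cross E B) X
    (((∑ i, (E i) ^ 2) + ∑ i, (B i) ^ 2) / 2) (by positivity) (by
      have hs : ∑ i, cross E B i ^ 2 = (∑ i, (E i) ^ 2) * (∑ i, (B i) ^ 2)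
          - (∑ i, E i * B i) ^ 2 := by
        simp [cross, Fin.sum_univ_three]
        ring
      rw [hs]
      nlinarith [sq_nonneg ((∑ i, (E i) ^ 2) - ∑ i, (B i) ^ 2), sq_nonneg (∑ i, E i * B i)])
  simp only [mul_comm (cross E B _)] at h2
  rw [abs_le] at h1 h2
  obtain ⟨a1, a2⟩ := h1
  obtain ⟨b1, b2⟩ := h2
  have hr : Real.sqrt (∑ i, (X i) ^ 2) * e = Real.sqrt (∑ i, (X i) ^ 2) *
      ((∑ α : Fin 4, ‖ξ α‖ ^ 2) / 2) + Real.sqrt (∑ i, (X i) ^ 2) *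
      (((∑ i, (E i) ^ 2) + ∑ i, (B i) ^ 2) / 2) := by
    rw [he]; ring
  rw [sub_mul, add_mul]
  constructor <;> linarith
end

section
/- Let ε > 0, let Φ : ℝ⁴ → ℂ be differentiable at a point x with Φ(x) ≠ 0, and let A, U ∈ ℝ⁴ be real four-vectors (values at x). With D_αΦ = ε ∂_αΦ + i A_α Φ, J_α = −Im(Φ · conj(D_αΦ)) and ρ = |Φ|², the following identity holds at x (all sums Euclidean over α = 0,1,2,3): Σ_α |D_αΦ − i U_α Φ|² / 2 = ε² Σ_α (∂_α|Φ|)² / 2 + Σ_α (J_α − ρ U_α)² / (2ρ). -/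
open ComplexConjugate

noncomputable def pd (f : (Fin 4 → ℝ) → ℂ) (α : Fin 4) (x : Fin 4 → ℝ) : ℂ :=
  fderiv ℝ f x (Pi.single α 1)

noncomputable def pdR (f : (Fin 4 → ℝ) → ℝ) (α : Fin 4) (x : Fin 4 → ℝ) : ℝ :=
  fderiv ℝ f x (Pi.single α 1)

lemma pdR_norm_mul (Φ : (Fin 4 → ℝ) → ℂ) (x : Fin 4 → ℝ)
    (hΦ : DifferentiableAt ℝ Φ x) (hne : Φ x ≠ 0) (α : Fin 4) :
    ‖Φ x‖ * pdR (fun y => ‖Φ y‖) α x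
      = (Φ x).re * (pd Φ α x).re + (Φ x).im * (pd Φ α x).im := by
  have hn : DifferentiableAt ℝ (fun y => ‖Φ y‖) x := hΦ.norm ℝ hne
  have h1 := hn.hasFDerivAt.pow 2
  have h2 := hΦ.hasFDerivAt.norm_sq
  have h3 := congrArg (fun L => L (Pi.single α 1)) (h1.unique h2)
  simp [Complex.inner] at h3
  unfold pdR pd
  linarith

/-- Identity (6.2) of Proposition 6.2: the kinetic part of the modulated energy density,
`Σ_α |D_αΦ − iU_αΦ|²/2 = ε² Σ_α (∂_α√ρ)²/2 + Σ_α (J_α − ρU_α)²/(2ρ)`. -/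
theorem stmt10 (ε : ℝ) (hε : 0 < ε)
    (Φ : (Fin 4 → ℝ) → ℂ) (x : Fin 4 → ℝ)
    (hΦ : DifferentiableAt ℝ Φ x) (hne : Φ x ≠ 0)
    (A U : Fin 4 → ℝ)
    (D : Fin 4 → ℂ) (hD : ∀ α, D α = (ε : ℂ) * pd Φ α x + Complex.I * (A α : ℂ) * Φ x)
    (J : Fin 4 → ℝ) (hJ : ∀ α, J α = - (Φ x * conj (D α)).im)
    (ρ : ℝ) (hρ : ρ = ‖Φ x‖ ^ 2) :
    (∑ α : Fin 4, ‖D α - Complex.I * (U α : ℂ) * Φ x‖ ^ 2) / 2 =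
      ε ^ 2 * (∑ α : Fin 4, (pdR (fun y => ‖Φ y‖) α x) ^ 2) / 2
      + (∑ α : Fin 4, (J α - ρ * U α) ^ 2) / (2 * ρ) := by
  have hn : 0 < ‖Φ x‖ := norm_pos_iff.mpr hne
  have hρ0 : 0 < ρ := by rw [hρ]; positivity
  have hρ2 : ρ = (Φ x).re ^ 2 + (Φ x).im ^ 2 := by
    rw [hρ, Complex.sq_norm, Complex.normSq_apply]; ring
  have key : ∀ α, ‖D α - Complex.I * (U α : ℂ) * Φ x‖ ^ 2 =
      ε ^ 2 * (pdR (fun y => ‖Φ y‖) α x) ^ 2 + (J α - ρ * U α) ^ 2 / ρ := by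
    intro α
    have h := pdR_norm_mul Φ x hΦ hne α
    have h' : ρ * (pdR (fun y => ‖Φ y‖) α x) ^ 2 =
        ((Φ x).re * (pd Φ α x).re + (Φ x).im * (pd Φ α x).im) ^ 2 := by
      rw [← h, hρ]; ring
    have hm : ρ * ‖D α - Complex.I * (U α : ℂ) * Φ x‖ ^ 2 =
        ε ^ 2 * (ρ * (pdR (fun y => ‖Φ y‖) α x) ^ 2) + (J α - ρ * U α) ^ 2 := by
      rw [h', hJ, hD, Complex.sq_norm, Complex.normSq_apply, hρ2]
      simp
      ring
    apply mul_left_cancel₀ hρ0.ne'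
    rw [hm]
    field_simp
  simp only [key]
  rw [Finset.sum_add_distrib, ← Finset.mul_sum, ← Finset.sum_div]
  field_simp
end

section
/- Let ω : ℝ⁴ → ℝ be C², A : ℝ⁴ → ℝ⁴ be C¹ and Ψ : ℝ⁴ → ℂ be C¹. Define U_α = ∂_αω + A_α, F_{αβ} = ∂_αA_β − ∂_βA_α, ρ = |Ψ|², and raised components U^α = η_αU_α (η₀ = −1, ηᵢ = 1). Assume on ℝ⁴ the transport equation 2 Σ_α U^α ∂_αΨ + (Σ_α ∂_αU^α) Ψ = 0 and the eikonal equation Σ_α U^α U_α = −1. Then (U, F, ρ) satisfies on ℝ⁴: (i) the continuity equation Σ_α U^α ∂_α ρ + (Σ_α ∂_αU^α) ρ = 0, and (ii) for each β, the pressureless Euler equation Σ_α U^α ∂_α U_β = Σ_α U^α F_{αβ}. In particular, together with the Maxwell equation ∇_αF^{αβ} = U^βρ of the WKB system, (U, F, ρ) is a solution of the relativistic Euler–Maxwell system. -/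
open ComplexConjugate

/-- The Minkowski signs: `η₀ = −1`, `ηᵢ = 1`. -/
noncomputable def eta : Fin 4 → ℝ := fun α => if α = 0 then -1 else 1

/-- Partial derivatives of `U`. -/
theorem aux_U (ω : (Fin 4 → ℝ) → ℝ) (hω : ContDiff ℝ 2 ω)
    (A : (Fin 4 → ℝ) → Fin 4 → ℝ) (hA : ContDiff ℝ 1 A)
    (U : Fin 4 → (Fin 4 → ℝ) → ℝ) (hU : ∀ α x, U α x = pdR ω α x + A x α)
    (α : Fin 4) (x : Fin 4 → ℝ) :
    DifferentiableAt ℝ (U α) x ∧ ∀ β, pdR (U α) β x =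
      fderiv ℝ (fderiv ℝ ω) x (Pi.single β 1) (Pi.single α 1) + pdR (fun y => A y α) β x := by
  have hd : DifferentiableAt ℝ (fderiv ℝ ω) x :=
    ((hω.fderiv_right (m := 1) (by norm_num)).differentiable (by norm_num)) x
  have hAα : DifferentiableAt ℝ (fun y => A y α) x :=
    differentiableAt_pi.1 ((hA.differentiable (by norm_num)) x) α
  have h1 := hd.hasFDerivAt.clm_apply (hasFDerivAt_const (Pi.single α (1 : ℝ) : Fin 4 → ℝ) x)
  have h2 := h1.add hAα.hasFDerivAt
  have hUe : U α = (fun y => fderiv ℝ ω y (Pi.single α 1)) + (fun y => A y α) := by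
    funext y
    simp [hU, pdR]
  rw [hUe]
  refine ⟨h2.differentiableAt, fun β => ?_⟩
  unfold pdR
  rw [h2.fderiv]
  simp

/-- Proposition A.2: from the WKB transport and eikonal equations for `(ω, Ψ, A)`, the
triple `(U, F, ρ) = (∇ω + A, dA, |Ψ|²)` satisfies the continuity equation and the
pressureless Euler equation of the relativistic Euler-Maxwell system. -/
theorem stmt12 (ω : (Fin 4 → ℝ) → ℝ) (hω : ContDiff ℝ 2 ω)
    (A : (Fin 4 → ℝ) → Fin 4 → ℝ) (hA : ContDiff ℝ 1 A)
    (Ψ : (Fin 4 → ℝ) → ℂ) (hΨ : ContDiff ℝ 1 Ψ)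
    (U : Fin 4 → (Fin 4 → ℝ) → ℝ) (hU : ∀ α x, U α x = pdR ω α x + A x α)
    (F : Fin 4 → Fin 4 → (Fin 4 → ℝ) → ℝ)
    (hF : ∀ (α β : Fin 4) x,
      F α β x = pdR (fun y => A y β) α x - pdR (fun y => A y α) β x)
    (ρ : (Fin 4 → ℝ) → ℝ) (hρ : ∀ x, ρ x = ‖Ψ x‖ ^ 2)
    (htransport : ∀ x, 2 * (∑ α : Fin 4, ((eta α * U α x : ℝ) : ℂ) * pd Ψ α x)
        + (((∑ α : Fin 4, eta α * pdR (U α) α x : ℝ)) : ℂ) * Ψ x = 0)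
    (heikonal : ∀ x, ∑ α : Fin 4, eta α * U α x * U α x = -1) :
    (∀ x, (∑ α : Fin 4, eta α * U α x * pdR ρ α x)
        + (∑ α : Fin 4, eta α * pdR (U α) α x) * ρ x = 0) ∧
    (∀ (β : Fin 4) x, ∑ α : Fin 4, eta α * U α x * pdR (U β) α x
        = ∑ α : Fin 4, eta α * U α x * F α β x) := by
  have hUd := aux_U ω hω A hA U hU
  constructor
  · intro x
    have hΨd : DifferentiableAt ℝ Ψ x := (hΨ.differentiable (by norm_num)) x
    have hρd : ∀ α, pdR ρ α x = 2 * ((Ψ x).re * (pd Ψ α x).re + (Ψ x).im * (pd Ψ α x).im) := by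
      intro α
      have hρe : ρ = fun y => ‖Ψ y‖ ^ 2 := funext hρ
      have h := hΨd.hasFDerivAt.norm_sq
      unfold pdR pd
      rw [hρe, h.fderiv]
      simp [Complex.inner]
      ring
    have ht := htransport x
    have hre := congrArg Complex.re ht
    have him := congrArg Complex.im ht
    have hn : ρ x = (Ψ x).re * (Ψ x).re + (Ψ x).im * (Ψ x).im := by
      rw [hρ, Complex.sq_norm, Complex.normSq_apply]
    generalize (∑ α : Fin 4, eta α * pdR (U α) α x) = D at *
    simp only [Fin.sum_univ_four, Complex.add_re, Complex.add_im, Complex.mul_re, Complex.mul_im,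
      Complex.ofReal_re, Complex.ofReal_im, Complex.re_ofNat, Complex.im_ofNat, Complex.zero_re,
      Complex.zero_im, zero_mul, sub_zero, add_zero] at hre him
    simp only [Fin.sum_univ_four, hρd, hn]
    linear_combination (Ψ x).re * hre + (Ψ x).im * him
  · intro β x
    have hsym : ∀ v w, fderiv ℝ (fderiv ℝ ω) x v w = fderiv ℝ (fderiv ℝ ω) x w v :=
      (hω.contDiffAt.isSymmSndFDerivAt (by simp))
    have he : ∑ α : Fin 4, eta α * U α x * pdR (U α) β x = 0 := by
      have h : HasFDerivAt (fun y => ∑ α : Fin 4, eta α * (U α y * U α y)) _ x :=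
        HasFDerivAt.fun_sum (u := Finset.univ) fun α _ =>
          (((hUd α x).1.hasFDerivAt.mul (hUd α x).1.hasFDerivAt).const_mul (eta α))
      have hc : (fun y => ∑ α : Fin 4, eta α * (U α y * U α y)) = fun _ => (-1 : ℝ) := by
        funext y
        simpa only [mul_assoc] using heikonal y
      rw [hc] at h
      have h0 := h.unique (hasFDerivAt_const _ _)
      have h1 := congrArg (fun L => L (Pi.single β 1)) h0
      simp [Fin.sum_univ_four] at h1
      simp only [Fin.sum_univ_four, pdR]
      linear_combination h1 / 2
    rw [← sub_eq_zero, ← Finset.sum_sub_distrib, ← he]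
    refine Finset.sum_congr rfl fun α _ => ?_
    rw [hF, (hUd β x).2, (hUd α x).2, hsym (Pi.single α 1)]
    ring
end

section
/- Let Φ ∈ ℂ, d = (d₀, d₁, d₂, d₃) ∈ ℂ⁴, U = (U₀, U₁, U₂, U₃) ∈ ℝ⁴ with −U₀² + U₁² + U₂² + U₃² = −1, let F^ε and F be antisymmetric real 4×4 matrices, and let ρ ∈ ℝ. With η_α = −1 if α = 0 and η_α = 1 otherwise, η_{αβ} = diag(−1,1,1,1), define: J^ε_α = −Im(Φ·conj(d_α)); T^ε_{αβ} = Re(d_α conj(d_β)) − ½η_{αβ}(Σ_γ η_γ|d_γ|² + |Φ|²) + Σ_μ η_μ F^ε_{αμ}F^ε_{βμ} − ¼η_{αβ}Σ_{μ,ν}η_μη_ν(F^ε_{μν})²; T_{αβ} = ρU_αU_β + Σ_μ η_μ F_{αμ}F_{βμ} − ¼η_{αβ}Σ_{μ,ν}η_μη_ν(F_{μν})²; ξ_α = d_α − iU_αΦ; Ξ_{αβ} = F^ε_{αβ} − F_{αβ}; h_{αβ} = Re(ξ_α conj(ξ_β)) − ½η_{αβ}Σ_γ η_γ|ξ_γ|²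 + Σ_μ η_μ Ξ_{αμ}Ξ_{βμ} − ¼η_{αβ}Σ_{μ,ν}η_μη_ν(Ξ_{μν})²; I_{αβ} = −U_αU_β(ρ − |Φ|²) + U_α(J^ε_β − U_β|Φ|²) + U_β(J^ε_α − U_α|Φ|²) + Σ_μ η_μ [F_{αμ}Ξ_{βμ} + Ξ_{αμ}F_{βμ}] − η_{αβ}Σ_γ η_γ (J^ε_γ − U_γ|Φ|²)U_γ − ½η_{αβ}Σ_{μ,ν}η_μη_ν F_{μν}Ξ_{μν}. Then for all α, β ∈ {0,1,2,3}: T^ε_{αβ} − T_{αβ} = h_{αβ} + I_{αβ}. -/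
open ComplexConjugate

/-- The Minkowski metric `η_{αβ} = diag(−1,1,1,1)`. -/
noncomputable def etaM : Fin 4 → Fin 4 → ℝ := fun α β => if α = β then eta α else 0

/-- Proposition 5.1: the pointwise algebraic decomposition
`T^ε_{mKGM} − T_{REM} = h + I` of the difference of the Klein-Gordon-Maxwell and
Euler-Maxwell stress-energy tensors into the modulated stress-energy tensor `h`
(quadratic in `ξ = d − iUΦ`, `Ξ = F^ε − F`) and the linear part `I`. -/
theorem stmt16 (Φ : ℂ) (d : Fin 4 → ℂ) (U : Fin 4 → ℝ)
    (hUnorm : - (U 0) ^ 2 + (U 1) ^ 2 + (U 2) ^ 2 + (U 3) ^ 2 = -1)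
    (Fe F : Fin 4 → Fin 4 → ℝ)
    (hFeanti : ∀ α β, Fe α β = - Fe β α) (hFanti : ∀ α β, F α β = - F β α)
    (ρ : ℝ)
    (J : Fin 4 → ℝ) (hJ : ∀ α, J α = - (Φ * conj (d α)).im)
    (Te : Fin 4 → Fin 4 → ℝ)
    (hTe : ∀ α β, Te α β = (d α * conj (d β)).re
      - (1/2) * etaM α β *
          ((∑ γ : Fin 4, eta γ * ‖d γ‖ ^ 2) + ‖Φ‖ ^ 2)
      + (∑ m : Fin 4, eta m * Fe α m * Fe β m)
      - (1/4) * etaM α β * ∑ m : Fin 4, ∑ n : Fin 4, eta m * eta n * (Fe m n) ^ 2)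
    (T : Fin 4 → Fin 4 → ℝ)
    (hT : ∀ α β, T α β = ρ * U α * U β
      + (∑ m : Fin 4, eta m * F α m * F β m)
      - (1/4) * etaM α β * ∑ m : Fin 4, ∑ n : Fin 4, eta m * eta n * (F m n) ^ 2)
    (ξ : Fin 4 → ℂ) (hξ : ∀ α, ξ α = d α - Complex.I * (U α : ℂ) * Φ)
    (Ξ : Fin 4 → Fin 4 → ℝ) (hΞ : ∀ α β, Ξ α β = Fe α β - F α β)
    (h : Fin 4 → Fin 4 → ℝ)
    (hh : ∀ α β, h α β = (ξ α * conj (ξ β)).re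
      - (1/2) * etaM α β * (∑ γ : Fin 4, eta γ * ‖ξ γ‖ ^ 2)
      + (∑ m : Fin 4, eta m * Ξ α m * Ξ β m)
      - (1/4) * etaM α β * ∑ m : Fin 4, ∑ n : Fin 4, eta m * eta n * (Ξ m n) ^ 2)
    (I : Fin 4 → Fin 4 → ℝ)
    (hI : ∀ α β, I α β = - U α * U β * (ρ - ‖Φ‖ ^ 2)
      + U α * (J β - U β * ‖Φ‖ ^ 2) + U β * (J α - U α * ‖Φ‖ ^ 2)
      + (∑ m : Fin 4, eta m * (F α m * Ξ β m + Ξ α m * F β m))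
      - etaM α β * (∑ γ : Fin 4, eta γ * (J γ - U γ * ‖Φ‖ ^ 2) * U γ)
      - (1/2) * etaM α β * ∑ m : Fin 4, ∑ n : Fin 4, eta m * eta n * F m n * Ξ m n) :
    ∀ α β : Fin 4, Te α β - T α β = h α β + I α β := by
  intro α β
  have hn : ∀ z : ℂ, ‖z‖ ^ 2 = z.re ^ 2 + z.im ^ 2 := by
    intro z
    rw [← Complex.normSq_eq_norm_sq, Complex.normSq_apply]
    ring
  -- first quadratic term
  have h1 : (d α * conj (d β)).re = (ξ α * conj (ξ β)).re + U α * U β * ‖Φ‖ ^ 2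
      + U α * (J β - U β * ‖Φ‖ ^ 2) + U β * (J α - U α * ‖Φ‖ ^ 2) := by
    simp [hξ, hJ, hn]
    ring
  -- trace of the matter part
  have h2 : (∑ γ : Fin 4, eta γ * ‖d γ‖ ^ 2) + ‖Φ‖ ^ 2
      = (∑ γ : Fin 4, eta γ * ‖ξ γ‖ ^ 2)
        + 2 * (∑ γ : Fin 4, eta γ * (J γ - U γ * ‖Φ‖ ^ 2) * U γ) := by
    simp [hξ, hJ, hn, Fin.sum_univ_four, eta]
    linear_combination (Φ.re ^ 2 + Φ.im ^ 2) * hUnorm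
  -- electromagnetic part
  have h3 : (∑ m : Fin 4, eta m * Fe α m * Fe β m)
      = (∑ m : Fin 4, eta m * F α m * F β m) + (∑ m : Fin 4, eta m * Ξ α m * Ξ β m)
        + (∑ m : Fin 4, eta m * (F α m * Ξ β m + Ξ α m * F β m)) := by
    simp only [← Finset.sum_add_distrib, hΞ]
    exact Finset.sum_congr rfl fun m _ => by ring
  have h4 : (∑ m : Fin 4, ∑ n : Fin 4, eta m * eta n * (Fe m n) ^ 2)
      = (∑ m : Fin 4, ∑ n : Fin 4, eta m * eta n * (F m n) ^ 2)
        + (∑ m : Fin 4, ∑ n : Fin 4, eta m * eta n * (Ξ m n) ^ 2)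
        + 2 * ∑ m : Fin 4, ∑ n : Fin 4, eta m * eta n * F m n * Ξ m n := by
    simp only [Finset.mul_sum, ← Finset.sum_add_distrib, hΞ]
    exact Finset.sum_congr rfl fun m _ => Finset.sum_congr rfl fun n _ => by ring
  rw [hTe, hT, hh, hI, h1, h2, h3, h4]
  ring
end
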